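/- Let $d\ge 1$ be an integer. Both walks below act on $\mathbb{C}^d\otimes\mathbb{C}^2\otimes\mathbb{C}^2$ with basis $|n,a,b\rangle$, $n\in\mathbb{Z}/d\mathbb{Z}$, $a,b\in\{\downarrow,\uparrow\}$ (positions are taken modulo $d$). For $\theta\in\mathbb{R}$ let $C(\theta)=\begin{pmatrix}\cos\theta&\sin\theta\\ \sin\theta&-\cos\theta\end{pmatrix}$ in the ordered basis $|\downarrow\rangle,|\uparrow\rangle$. Recycled-coin walk (registers: position, first coin, second coin). For $\phi\in\mathbb{R}$ let $U(\phi)=(I\otimes M)\,S\,(I\otimes\widehat C(\phi))$, where $\widehat C(\phi)=|\downarrow\rangle\langle\downarrow|\otimes C(\tfrac{\pi}{4})+|\uparrow\rangle\langle\uparrow|\otimes C(\tfrac{\pi}{4}(1+\phi))$, where $S|n,c_1,\downarrow\rangle=|n-1,c_1,\downarrow\rangle$ and $S|n,c_1,\uparrow\rangle=|n+1,c_1,\uparrow\rangle$, and where $M$ swaps the two coins. Put $p(n,t,\phi;\psi_0)=\sum_{c_1,c_2}|\langle n,c_1,c_2|U(\phi)^t|\psi_0\rangle|^2$. Walk with memory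 (registers: position, memory, coin). Let $U_{\mathcal M}=S_{\mathcal M}\,(I\otimes I\otimes C(\tfrac{\pi}{4}))$, where $S_{\mathcal M}$ maps $|n,\downarrow,\downarrow\rangle\mapsto|n-1,\downarrow,\downarrow\rangle$, $|n,\downarrow,\uparrow\rangle\mapsto|n+1,\uparrow,\uparrow\rangle$, $|n,\uparrow,\downarrow\rangle\mapsto|n+1,\uparrow,\downarrow\rangle$, $|n,\uparrow,\uparrow\rangle\mapsto|n-1,\downarrow,\uparrow\rangle$. Put $p_{\mathcal M}(n,t;\psi_0)=\sum_{m,c}|\langle n,m,c|U_{\mathcal M}^t|\psi_0\rangle|^2$. A vector of $\mathbb{C}^4$ is read as a state of the last two registers as follows. For the recycled-coin walk its entries are the coordinates in the ordered basis $|\downarrow\downarrow\rangle,|\downarrow\uparrow\rangle,|\uparrow\downarrow\rangle,|\uparrow\uparrow\rangle$ (first coin, second coin). For the walk with memory its entries are the coordinates in the ordered basis $|\downarrow\downarrow\rangle,|\uparrow\downarrow\rangle,|\downarrow\uparrow\rangle,|\uparrow\uparrow\rangle$, written (memory, coin), i.e. the lexicographic order of (coin, memory). Let $P$ be the $4\times4$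 permutation matrix sending $(\alpha,\beta,\gamma,\delta)^T$ to $(\alpha,\gamma,\delta,\beta)^T$ (rows $e_1,e_3,e_4,e_2$), and let $P^*$ be its conjugate transpose. Let $v\in\mathbb{C}^4$ be a unit vector. Then for all $n\in\mathbb{Z}/d\mathbb{Z}$ and all integers $t\ge 0$, $$p_{\mathcal M}(n,t;|0\rangle\otimes P^*v)=p(n,t,2;|0\rangle\otimes v).$$ In particular, for every $n$ and every $T\ge1$ the averages $\frac1T\sum_{t=1}^T p_{\mathcal M}(n,t;|0\rangle\otimes P^*v)$ and $\frac1T\sum_{t=1}^T p(n,t,2;|0\rangle\otimes v)$ coincide; hence as $T\to\infty$ one of them converges to a limit $L$ if and only if the other does, so the limiting distributions coincide whenever they exist. -/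

import Mathlib

open scoped Matrix Kronecker

noncomputable section

namespace CycleWalk

/-- A register with basis `|↓⟩ = 0`, `|↑⟩ = 1`. -/
abbrev Spin := Fin 2

abbrev dn : Spin := 0

abbrev up : Spin := 1

/-- Basis labels `|n, a, b⟩` of `ℂ^d ⊗ ℂ² ⊗ ℂ²`. For the recycled-coin walk `a, b` are the two coins
(`b` is the active one); for the walk with memory `a` is the memory and `b` is the coin. -/
abbrev Label (d : ℕ) := ZMod d × (Spin × Spin)

/-- The coin `C(θ)`. -/
def C (θ : ℝ) : Matrix Spin Spin ℂ :=
  !![(Real.cos θ : ℂ), (Real.sin θ : ℂ); (Real.sin θ : ℂ), -(Real.cos θ : ℂ)]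

/-- The linear operator given on basis vectors by `|x⟩ ↦ |f x⟩`; its `(x, y)` entry is `⟨x|f y⟩`. -/
def basisMap {X : Type*} [DecidableEq X] (f : X → X) : Matrix X X ℂ :=
  Matrix.of fun x y => if x = f y then 1 else 0

/-! ### The recycled-coin walk -/

/-- `Ĉ(φ) = |↓⟩⟨↓| ⊗ C(π/4) + |↑⟩⟨↑| ⊗ C((π/4)(1+φ))`. -/
def coinFlip (φ : ℝ) : Matrix (Spin × Spin) (Spin × Spin) ℂ :=
  Matrix.single dn dn (1 : ℂ) ⊗ₖ C (Real.pi / 4) +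
    Matrix.single up up (1 : ℂ) ⊗ₖ C (Real.pi / 4 * (1 + φ))

/-- `|n,c₁,↓⟩ ↦ |n-1,c₁,↓⟩`, `|n,c₁,↑⟩ ↦ |n+1,c₁,↑⟩`. -/
def shift (d : ℕ) : Matrix (Label d) (Label d) ℂ :=
  basisMap fun x => (if x.2.2 = dn then x.1 - 1 else x.1 + 1, x.2)

/-- The memory update `M`, swapping the two coins. -/
def swapCoins : Matrix (Spin × Spin) (Spin × Spin) ℂ := basisMap Prod.swap

/-- `U(φ) = (I_P ⊗ M) · S · (I_P ⊗ Ĉ(φ))`. -/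
def U (d : ℕ) [NeZero d] (φ : ℝ) : Matrix (Label d) (Label d) ℂ :=
  ((1 : Matrix (ZMod d) (ZMod d) ℂ) ⊗ₖ swapCoins) * shift d *
    ((1 : Matrix (ZMod d) (ZMod d) ℂ) ⊗ₖ coinFlip φ)

/-- `p(n,t,φ;ψ₀)`. -/
def p (d : ℕ) [NeZero d] (n : ZMod d) (t : ℕ) (φ : ℝ) (ψ₀ : Label d → ℂ) : ℝ :=
  ∑ c₁ : Spin, ∑ c₂ : Spin, ‖((U d φ ^ t) *ᵥ ψ₀) (n, c₁, c₂)‖ ^ 2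

/-! ### The walk with memory -/

/-- `|n,↓,↓⟩ ↦ |n-1,↓,↓⟩`, `|n,↓,↑⟩ ↦ |n+1,↑,↑⟩`, `|n,↑,↓⟩ ↦ |n+1,↑,↓⟩`, `|n,↑,↑⟩ ↦ |n-1,↓,↑⟩`
(position, memory, coin). -/
def shiftMem (d : ℕ) : Matrix (Label d) (Label d) ℂ :=
  basisMap fun x =>
    match x with
    | (n, 0, 0) => (n - 1, dn, dn)
    | (n, 0, 1) => (n + 1, up, up)
    | (n, 1, 0) => (n + 1, up, dn)
    | (n, 1, 1) => (n - 1, dn, up)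

/-- `U_𝓜 = S_𝓜 · (I_P ⊗ I_M ⊗ C(π/4))`. -/
def UMem (d : ℕ) [NeZero d] : Matrix (Label d) (Label d) ℂ :=
  shiftMem d *
    ((1 : Matrix (ZMod d) (ZMod d) ℂ) ⊗ₖ ((1 : Matrix Spin Spin ℂ) ⊗ₖ C (Real.pi / 4)))

/-- `p_𝓜(n,t;ψ₀)`. -/
def pMem (d : ℕ) [NeZero d] (n : ZMod d) (t : ℕ) (ψ₀ : Label d → ℂ) : ℝ :=
  ∑ m : Spin, ∑ c : Spin, ‖((UMem d ^ t) *ᵥ ψ₀) (n, m, c)‖ ^ 2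

/-! ### Initial states -/

/-- `|0⟩ ⊗ ∑ᵢ vᵢ |bᵢ⟩`: the state at position `0` whose coordinate vector in the ordered basis `b` of
the two remaining registers is `v`. -/
def localized (d : ℕ) (b : Fin 4 → Spin × Spin) (v : Fin 4 → ℂ) : Label d → ℂ :=
  ∑ i : Fin 4, v i • Pi.single ((0 : ZMod d), b i) (1 : ℂ)

/-- Ordered basis for the recycled-coin walk, labels (first coin, second coin):
`|↓↓⟩, |↓↑⟩, |↑↓⟩, |↑↑⟩`. -/
def coinBasis : Fin 4 → Spin × Spin := ![(dn, dn), (dn, up), (up, dn), (up, up)]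

/-- Ordered basis for the walk with memory, labels (memory, coin): `|↓↓⟩, |↑↓⟩, |↓↑⟩, |↑↑⟩`, so the
memory varies fastest. In this ordering one step of the walk is, in Fourier space with
`x = exp(2πik/d)` and `y = exp(-2πik/d)`, the matrix
`(1/√2) [x,0,x,0; 0,y,0,y; 0,x,0,-x; y,0,-y,0]`. -/
def memBasis : Fin 4 → Spin × Spin := ![(dn, dn), (up, dn), (dn, up), (up, up)]

/-- The permutation matrix `P`, sending `(α,β,γ,δ)` to `(α,γ,δ,β)`. -/
def P : Matrix (Fin 4) (Fin 4) ℂ :=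
  !![1, 0, 0, 0; 0, 0, 1, 0; 0, 0, 0, 1; 0, 1, 0, 0]

/-- The average `(1/T) ∑_{t=1}^T f t`. -/
def timeAvg (f : ℕ → ℝ) (T : ℕ) : ℝ := (1 / (T : ℝ)) * ∑ t ∈ Finset.Icc 1 T, f t

end CycleWalk

end

/-!
The controlled flip `|m, c⟩ ↦ |m, m + c⟩` of the last two registers conjugates one walk into the
other. Flipping both sides of `C(θ)` gives `C(π - θ)`, and `φ = 2` is the value for which
`(π/4)(1 + φ) = π - π/4`; hence conjugation by the controlled flip turns `Ĉ(2)` into the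
uncontrolled coin `I ⊗ C(π/4)`, and it turns `M · S` into `S_𝓜`. The flip permutes the basis at each
position, so position probabilities are preserved; in the two ordered bases of `ℂ⁴` it is the
permutation matrix `P`.
-/

noncomputable section

namespace CycleWalk

section Matrices

variable {R X Y Z : Type*}

lemma submatrix_pow_mulVec_comp [Semiring R] [Fintype X] [DecidableEq X] [Fintype Y]
    [DecidableEq Y] (A : Matrix X X R) (e : Y ≃ X) (t : ℕ) (ψ : X → R) :
    A.submatrix e e ^ t *ᵥ (ψ ∘ e) = (A ^ t *ᵥ ψ) ∘ e := by
  induction t with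
  | zero => simp only [pow_zero, Matrix.one_mulVec]
  | succ t ih =>
    rw [pow_succ', pow_succ', ← Matrix.mulVec_mulVec, ← Matrix.mulVec_mulVec, ih,
      Matrix.submatrix_mulVec_equiv, Function.comp_assoc, e.self_comp_symm, Function.comp_id]

lemma one_kronecker_submatrix_prodCongr [MulZeroOneClass R] [DecidableEq X]
    (B : Matrix Y Y R) (e : Z ≃ Y) :
    ((1 : Matrix X X R) ⊗ₖ B).submatrix ((Equiv.refl X).prodCongr e) ((Equiv.refl X).prodCongr e) =
      1 ⊗ₖ B.submatrix e e :=
  rfl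

lemma basisMap_mul_basisMap [DecidableEq X] [Fintype X] (f g : X → X) :
    basisMap f * basisMap g = basisMap (f ∘ g) := by
  ext x y
  simp [basisMap, Matrix.mul_apply]

lemma one_kronecker_basisMap [DecidableEq X] [DecidableEq Y] (f : Y → Y) :
    (1 : Matrix X X ℂ) ⊗ₖ basisMap f = basisMap (Prod.map id f) := by
  ext ⟨x, y⟩ ⟨x', y'⟩
  simp [basisMap, Matrix.one_apply, Prod.ext_iff, ← ite_and, and_comm]

lemma basisMap_submatrix_of_semiconj [DecidableEq X] [DecidableEq Y] {f : X → X} {g : Y → Y}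
    {e : Y → X} (he : e.Injective) (h : Function.Semiconj e g f) :
    (basisMap f).submatrix e e = basisMap g := by
  ext x y
  simp [basisMap, ← h.eq, he.eq_iff]

end Matrices

lemma C_pi_sub (θ : ℝ) :
    C (Real.pi - θ) = (C θ).submatrix (Equiv.addLeft up) (Equiv.addLeft up) := by
  ext b b'
  fin_cases b <;> fin_cases b' <;> simp [C, up]

/-- The controlled flip `|m, c⟩ ↦ |m, m + c⟩` of the second spin, the sum being taken mod 2. -/
def controlledFlip : Spin × Spin ≃ Spin × Spin :=
  Equiv.prodShear (Equiv.refl Spin) Equiv.addLeft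

/-- The relabelling `|n, m, c⟩ ↦ |n, m, m + c⟩`, which carries basis states of the walk with memory
to basis states of the recycled-coin walk. -/
def relabel (d : ℕ) : Label d ≃ Label d :=
  (Equiv.refl (ZMod d)).prodCongr controlledFlip

lemma coinFlip_two_submatrix_controlledFlip :
    (coinFlip 2).submatrix controlledFlip controlledFlip = 1 ⊗ₖ C (Real.pi / 4) := by
  have upper_coin : C (Real.pi / 4 * (1 + 2)) =
      (C (Real.pi / 4)).submatrix (Equiv.addLeft up) (Equiv.addLeft up) := by
    rw [← C_pi_sub]
    ring_nf
  have flip_flip (c : Spin) : up + (up + c) = c := by decide +revert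
  ext ⟨m, c⟩ ⟨m', c'⟩
  fin_cases m <;> fin_cases m' <;> simp [coinFlip, controlledFlip, upper_coin, flip_flip]

lemma one_kronecker_swapCoins_mul_shift (d : ℕ) [NeZero d] :
    ((1 : Matrix (ZMod d) (ZMod d) ℂ) ⊗ₖ swapCoins) * shift d =
      basisMap fun x => (if x.2.2 = dn then x.1 - 1 else x.1 + 1, x.2.swap) := by
  rw [swapCoins, one_kronecker_basisMap, shift, basisMap_mul_basisMap]
  rfl

lemma swapCoins_mul_shift_submatrix_relabel (d : ℕ) [NeZero d] :
    (((1 : Matrix (ZMod d) (ZMod d) ℂ) ⊗ₖ swapCoins) * shift d).submatrix (relabel d) (relabel d) =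
      shiftMem d := by
  rw [one_kronecker_swapCoins_mul_shift, shiftMem]
  refine basisMap_submatrix_of_semiconj (relabel d).injective ?_
  rintro ⟨n, m, c⟩
  fin_cases m <;> fin_cases c <;> rfl

theorem U_two_submatrix_relabel (d : ℕ) [NeZero d] :
    (U d 2).submatrix (relabel d) (relabel d) = UMem d := by
  rw [U, ← Matrix.submatrix_mul_equiv _ _ _ (relabel d), swapCoins_mul_shift_submatrix_relabel,
    UMem, ← coinFlip_two_submatrix_controlledFlip, ← one_kronecker_submatrix_prodCongr, relabel]

/-- The permutation of `Fin 4` that `controlledFlip` induces between `memBasis` and `coinBasis`. -/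
def memToCoin : Equiv.Perm (Fin 4) where
  toFun := ![0, 3, 1, 2]
  invFun := ![0, 2, 3, 1]
  left_inv := by decide
  right_inv := by decide

lemma conjTranspose_P : Pᴴ = memToCoin.permMatrix ℂ := by
  ext i j
  fin_cases i <;> fin_cases j <;> simp [P, memToCoin]

lemma controlledFlip_comp_memBasis : controlledFlip ∘ memBasis = coinBasis ∘ memToCoin := by
  funext i
  fin_cases i <;> rfl

lemma localized_comp_prodCongr (d : ℕ) (b : Fin 4 → Spin × Spin) (v : Fin 4 → ℂ)
    (e : Equiv.Perm (Spin × Spin)) :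
    localized d (e ∘ b) v ∘ (Equiv.refl (ZMod d)).prodCongr e = localized d b v := by
  ext x
  simp [localized, Pi.single_apply, Prod.ext_iff]

lemma localized_comp_perm (d : ℕ) (b : Fin 4 → Spin × Spin) (v : Fin 4 → ℂ)
    (σ : Equiv.Perm (Fin 4)) : localized d (b ∘ σ) (v ∘ σ) = localized d b v := by
  simp only [localized, Function.comp_apply]
  exact Equiv.sum_comp σ fun i => v i • Pi.single ((0 : ZMod d), b i) (1 : ℂ)

lemma localized_memBasis (d : ℕ) (v : Fin 4 → ℂ) :
    localized d memBasis (Pᴴ *ᵥ v) = localized d coinBasis v ∘ relabel d := by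
  rw [conjTranspose_P, Matrix.permMatrix_mulVec, relabel,
    ← localized_comp_perm d coinBasis v memToCoin, ← controlledFlip_comp_memBasis,
    localized_comp_prodCongr]

end CycleWalk

end

open CycleWalk in
theorem statement6_general (d : ℕ) [NeZero d] (n : ZMod d) (t : ℕ) (ψ : Label d → ℂ) :
    pMem d n t (ψ ∘ relabel d) = p d n t 2 ψ := by
  rw [pMem, p, ← U_two_submatrix_relabel]
  simp only [submatrix_pow_mulVec_comp, Function.comp_apply]
  exact Finset.sum_congr rfl fun m _ =>
    Equiv.sum_comp (Equiv.addLeft m) fun c => ‖(U d 2 ^ t *ᵥ ψ) (n, m, c)‖ ^ 2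

theorem statement6 (d : ℕ) [NeZero d] (v : Fin 4 → ℂ) (hv : ∑ i : Fin 4, ‖v i‖ ^ 2 = 1) :
    (∀ (n : ZMod d) (t : ℕ),
      CycleWalk.pMem d n t (CycleWalk.localized d CycleWalk.memBasis (CycleWalk.Pᴴ *ᵥ v)) =
        CycleWalk.p d n t 2 (CycleWalk.localized d CycleWalk.coinBasis v)) ∧
    (∀ (n : ZMod d) (T : ℕ), 1 ≤ T →
      CycleWalk.timeAvg (fun t => CycleWalk.pMem d n t
          (CycleWalk.localized d CycleWalk.memBasis (CycleWalk.Pᴴ *ᵥ v))) T =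
        CycleWalk.timeAvg (fun t => CycleWalk.p d n t 2
          (CycleWalk.localized d CycleWalk.coinBasis v)) T) ∧
    (∀ (n : ZMod d) (L : ℝ),
      Filter.Tendsto (CycleWalk.timeAvg (fun t => CycleWalk.pMem d n t
          (CycleWalk.localized d CycleWalk.memBasis (CycleWalk.Pᴴ *ᵥ v))))
          Filter.atTop (nhds L) ↔
        Filter.Tendsto (CycleWalk.timeAvg (fun t => CycleWalk.p d n t 2
          (CycleWalk.localized d CycleWalk.coinBasis v)))
          Filter.atTop (nhds L)) := by
  simp only [CycleWalk.localized_memBasis, statement6_general, implies_true, and_self]
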